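/- For every δ ∈ [0,1/2], in the hard instance I_δ the uncertainty level satisfies d(C) = δ, and every menu of randomized contracts Γ satisfies R(Γ) ≥ √(2δ)/4. -/

import Mathlib

open Finset

variable {A Ω : Type} [Fintype A] [Fintype Ω] [Nonempty A] [Nonempty Ω]

/-- Agent's expected utility `U^a(p,c,a)` of action `a` under contract `p` and costs `c`. -/
noncomputable def Uag (F : A → Ω → ℝ) (p : Ω → ℝ) (c : A → ℝ) (a : A) : ℝ :=
  (∑ ω, F a ω * p ω) - c a

/-- Principal's expected utility when the agent plays action `a` under contract `p`. -/
noncomputable def prinAct (F : A → Ω → ℝ) (r p : Ω → ℝ) (a : A) : ℝ :=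
  ∑ ω, F a ω * (r ω - p ω)

/-- Principal's expected utility `U^p(p,c)`: the agent plays a best response,
with ties among best responses broken in favor of the principal. -/
noncomputable def Uprin (F : A → Ω → ℝ) (r p : Ω → ℝ) (c : A → ℝ) : ℝ :=
  sSup { x | ∃ a : A, (∀ a' : A, Uag F p c a' ≤ Uag F p c a) ∧ x = prinAct F r p a }

/-- A deterministic contract: nonnegative payments. -/
def IsContract (p : Ω → ℝ) : Prop := ∀ ω, 0 ≤ p ω

/-- `OPT(c)`: the supremum over contracts of the principal's expected utility against `c`. -/
noncomputable def OPT (F : A → Ω → ℝ) (r : Ω → ℝ) (c : A → ℝ) : ℝ :=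
  sSup { x | ∃ p : Ω → ℝ, IsContract p ∧ x = Uprin F r p c }

/-- The regret `R(p)` of a deterministic contract `p`. -/
noncomputable def regret (F : A → Ω → ℝ) (r : Ω → ℝ) (C : Set (A → ℝ)) (p : Ω → ℝ) : ℝ :=
  sSup { x | ∃ c ∈ C, x = OPT F r c - Uprin F r p c }

/-- Uncertainty level `d(C)`: the L∞-diameter of the uncertainty set. -/
noncomputable def uncLevel (C : Set (A → ℝ)) : ℝ :=
  sSup { x | ∃ c ∈ C, ∃ c' ∈ C, x = ‖c - c'‖ }

/-- The assumptions defining a principal–agent instance `(A, Ω, r, C, F)`. -/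
structure IsPAInstance (F : A → Ω → ℝ) (r : Ω → ℝ) (C : Set (A → ℝ)) : Prop where
  r_mem : ∀ ω, r ω ∈ Set.Icc (0:ℝ) 1
  F_mem : ∀ a ω, F a ω ∈ Set.Icc (0:ℝ) 1
  F_sum : ∀ a, ∑ ω, F a ω = 1
  C_nonempty : C.Nonempty
  C_mem : ∀ c ∈ C, ∀ a, c a ∈ Set.Icc (0:ℝ) 1
  zero_action : ∃ a : A, ∀ c ∈ C, c a = 0

/-- A randomized contract: a finitely supported probability distribution over
deterministic contracts, represented as a finite tuple of contracts with probabilities. -/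
structure RandCon (Ω : Type) where
  n : ℕ
  ps : Fin n → Ω → ℝ
  q : Fin n → ℝ
  q_nonneg : ∀ i, 0 ≤ q i
  q_sum : ∑ i, q i = 1

/-- All the contracts in the support are genuine (nonnegative) contracts. -/
def RandCon.valid {Ω : Type} (γ : RandCon Ω) : Prop := ∀ i ω, 0 ≤ γ.ps i ω

/-- Agent's expected utility `U^a(γ,c)` of a randomized contract. -/
noncomputable def UagRand (F : A → Ω → ℝ) (γ : RandCon Ω) (c : A → ℝ) : ℝ :=
  ∑ i, γ.q i * (⨆ a : A, Uag F (γ.ps i) c a)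

/-- Principal's expected utility `U^p(γ,c)` of a randomized contract. -/
noncomputable def UprinRand (F : A → Ω → ℝ) (r : Ω → ℝ) (γ : RandCon Ω) (c : A → ℝ) : ℝ :=
  ∑ i, γ.q i * Uprin F r (γ.ps i) c

/-- The regret `R(γ)` of a randomized contract. -/
noncomputable def regretRand (F : A → Ω → ℝ) (r : Ω → ℝ) (C : Set (A → ℝ))
    (γ : RandCon Ω) : ℝ :=
  sSup { x | ∃ c ∈ C, x = OPT F r c - UprinRand F r γ c }

/-- Principal's expected utility `U^p(Γ,c)` under a menu of randomized contracts:
the agent selects an element maximizing its own expected utility, breaking ties in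
favor of the principal. -/
noncomputable def UprinRMenu (F : A → Ω → ℝ) (r : Ω → ℝ) {K : ℕ} (Γ : Fin K → RandCon Ω)
    (c : A → ℝ) : ℝ :=
  sSup { x | ∃ i : Fin K, (∀ j : Fin K, UagRand F (Γ j) c ≤ UagRand F (Γ i) c) ∧
    x = UprinRand F r (Γ i) c }

/-- The regret `R(Γ)` of a menu of randomized contracts. -/
noncomputable def regretRMenu (F : A → Ω → ℝ) (r : Ω → ℝ) (C : Set (A → ℝ)) {K : ℕ}
    (Γ : Fin K → RandCon Ω) : ℝ :=
  sSup { x | ∃ c ∈ C, x = OPT F r c - UprinRMenu F r Γ c }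

/-! Let `U` be the agent's utility from the menu at costs `(0, 0)`. The total surplus there is at
most `1`, so the principal earns at most `1 - U`. At costs `(δ, 0)`, a contract `p` either leads to
the second action, which loses `√(2δ)` of reward, or to the first one, which requires a payment
`p₀ ≥ √(2δ) / 2`; that payment is a lower bound for the agent's utility from `p` at costs `(0, 0)`.
In both cases the principal earns at most `1 - √(2δ) + U`. The two optima are at least `1` and
`1 - √(2δ) / 2`, so the two regrets add up to at least `√(2δ) / 2`, whatever `U` is. -/

section Contracts

variable {Act Out : Type} [Fintype Out]
  {F : Act → Out → ℝ} {r p : Out → ℝ} {c : Act → ℝ} {a : Act}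

/-- The action `a` maximizes the agent's expected utility under contract `p` and costs `c`. -/
def IsBestResponse (F : Act → Out → ℝ) (p : Out → ℝ) (c : Act → ℝ) (a : Act) : Prop :=
  ∀ a', Uag F p c a' ≤ Uag F p c a

/-- The total surplus that action `a` creates, shared between agent and principal by the
payments. -/
noncomputable def surplus (F : Act → Out → ℝ) (r : Out → ℝ) (c : Act → ℝ) (a : Act) : ℝ :=
  (∑ ω, F a ω * r ω) - c a

theorem prinAct_add_Uag (F : Act → Out → ℝ) (r p : Out → ℝ) (c : Act → ℝ) (a : Act) :
    prinAct F r p a + Uag F p c a = surplus F r c a := by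
  simp only [prinAct, Uag, surplus, mul_sub, Finset.sum_sub_distrib]
  ring

theorem prinAct_le_sum_reward (hF : ∀ ω, 0 ≤ F a ω) (hp : IsContract p) :
    prinAct F r p a ≤ ∑ ω, F a ω * r ω :=
  Finset.sum_le_sum fun ω _ =>
    mul_le_mul_of_nonneg_left (sub_le_self _ (hp ω)) (hF ω)

variable [Finite Act]

theorem Uag_le_iSup (F : Act → Out → ℝ) (p : Out → ℝ) (c : Act → ℝ) (a : Act) :
    Uag F p c a ≤ ⨆ a', Uag F p c a' :=
  le_ciSup (Set.finite_range _).bddAbove a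

theorem prinAct_le_Uprin (ha : IsBestResponse F p c a) : prinAct F r p a ≤ Uprin F r p c := by
  refine le_csSup ((Set.finite_range (prinAct F r p)).subset ?_).bddAbove ⟨a, ha, rfl⟩
  rintro _ ⟨a', -, rfl⟩
  exact ⟨a', rfl⟩

theorem Uprin_le [Nonempty Act] {b : ℝ}
    (h : ∀ a, IsBestResponse F p c a → prinAct F r p a ≤ b) :
    Uprin F r p c ≤ b := by
  obtain ⟨a, ha⟩ := Finite.exists_max (Uag F p c)
  refine csSup_le ⟨_, a, ha, rfl⟩ ?_
  rintro _ ⟨a', ha', rfl⟩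
  exact h a' ha'

theorem Uprin_add_iSup_Uag_le [Nonempty Act] {W : ℝ} (hW : ∀ a, surplus F r c a ≤ W) :
    Uprin F r p c + ⨆ a, Uag F p c a ≤ W := by
  refine le_sub_iff_add_le.1 (Uprin_le fun a ha => ?_)
  have hsup : ⨆ a', Uag F p c a' ≤ Uag F p c a := ciSup_le ha
  linarith [hW a, prinAct_add_Uag F r p c a]

theorem prinAct_le_OPT (hF : ∀ a ω, 0 ≤ F a ω) (hp : IsContract p)
    (ha : IsBestResponse F p c a) : prinAct F r p a ≤ OPT F r c := by
  have : Nonempty Act := ⟨a⟩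
  obtain ⟨M, hM⟩ := (Set.finite_range fun a => ∑ ω, F a ω * r ω).bddAbove
  refine (prinAct_le_Uprin ha).trans (le_csSup ⟨M, ?_⟩ ⟨p, hp, rfl⟩)
  rintro _ ⟨p', hp', rfl⟩
  exact Uprin_le fun a' _ => (prinAct_le_sum_reward (hF a') hp').trans (hM ⟨a', rfl⟩)

end Contracts

section Menus

variable {Act Out : Type} [Fintype Out] {F : Act → Out → ℝ} {r : Out → ℝ} {c c' : Act → ℝ}

theorem UprinRand_le_add_mul_UagRand {γ : RandCon Out} {w k : ℝ}
    (h : ∀ i, Uprin F r (γ.ps i) c ≤ w + k * ⨆ a, Uag F (γ.ps i) c' a) :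
    UprinRand F r γ c ≤ w + k * UagRand F γ c' :=
  calc UprinRand F r γ c
      ≤ ∑ i, γ.q i * (w + k * ⨆ a, Uag F (γ.ps i) c' a) :=
        Finset.sum_le_sum fun i _ => mul_le_mul_of_nonneg_left (h i) (γ.q_nonneg i)
    _ = (∑ i, γ.q i) * w + k * UagRand F γ c' := by
        simp only [UagRand, mul_add, Finset.sum_add_distrib, Finset.sum_mul, Finset.mul_sum,
          mul_left_comm]
    _ = w + k * UagRand F γ c' := by rw [γ.q_sum, one_mul]

variable {K : ℕ} {Γ : Fin K → RandCon Out}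

/-- The agent's expected utility `U^a(Γ,c)` from choosing optimally in the menu `Γ`. -/
noncomputable def UagRMenu (F : Act → Out → ℝ) (Γ : Fin K → RandCon Out) (c : Act → ℝ) : ℝ :=
  ⨆ i, UagRand F (Γ i) c

theorem UagRand_le_UagRMenu (F : Act → Out → ℝ) (Γ : Fin K → RandCon Out) (c : Act → ℝ)
    (i : Fin K) : UagRand F (Γ i) c ≤ UagRMenu F Γ c :=
  le_ciSup (f := fun i => UagRand F (Γ i) c) (Set.finite_range _).bddAbove i

theorem OPT_sub_UprinRMenu_le_regretRMenu {C : Set (Act → ℝ)} (hC : C.Finite) (hc : c ∈ C) :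
    OPT F r c - UprinRMenu F r Γ c ≤ regretRMenu F r C Γ := by
  refine le_csSup ((hC.image fun c => OPT F r c - UprinRMenu F r Γ c).subset ?_).bddAbove
    ⟨c, hc, rfl⟩
  rintro _ ⟨c', hc', rfl⟩
  exact ⟨c', hc', rfl⟩

variable [NeZero K]

theorem UprinRMenu_le {b : ℝ}
    (h : ∀ i, UagRMenu F Γ c ≤ UagRand F (Γ i) c → UprinRand F r (Γ i) c ≤ b) :
    UprinRMenu F r Γ c ≤ b := by
  obtain ⟨i, hi⟩ := Finite.exists_max fun i => UagRand F (Γ i) c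
  refine csSup_le ⟨_, i, hi, rfl⟩ ?_
  rintro _ ⟨j, hj, rfl⟩
  exact h j (ciSup_le hj)

theorem UprinRMenu_le_add_UagRMenu {w : ℝ} (hΓ : ∀ i, (Γ i).valid)
    (h : ∀ p, IsContract p → Uprin F r p c ≤ w + ⨆ a, Uag F p c' a) :
    UprinRMenu F r Γ c ≤ w + UagRMenu F Γ c' := by
  refine UprinRMenu_le fun i _ => ?_
  have hrand : UprinRand F r (Γ i) c ≤ w + 1 * UagRand F (Γ i) c' :=
    UprinRand_le_add_mul_UagRand fun j => by simpa only [one_mul] using h _ (hΓ i j)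
  linarith [UagRand_le_UagRMenu F Γ c' i]

variable [Finite Act] [Nonempty Act]

theorem UprinRMenu_add_UagRMenu_le {W : ℝ} (hW : ∀ a, surplus F r c a ≤ W) :
    UprinRMenu F r Γ c + UagRMenu F Γ c ≤ W := by
  refine le_sub_iff_add_le.1 (UprinRMenu_le fun i hi => ?_)
  have hrand : UprinRand F r (Γ i) c ≤ W + -1 * UagRand F (Γ i) c :=
    UprinRand_le_add_mul_UagRand fun j => by
      linarith [Uprin_add_iSup_Uag_le (p := (Γ i).ps j) hW]
  linarith

theorem OPT_add_OPT_sub_le_two_mul_regretRMenu {C : Set (Act → ℝ)} {W w : ℝ} (hC : C.Finite)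
    (hc : c ∈ C) (hc' : c' ∈ C) (hΓ : ∀ i, (Γ i).valid) (hW : ∀ a, surplus F r c a ≤ W)
    (hw : ∀ p, IsContract p → Uprin F r p c' ≤ w + ⨆ a, Uag F p c a) :
    OPT F r c + OPT F r c' - (W + w) ≤ 2 * regretRMenu F r C Γ := by
  have hregret : OPT F r c - UprinRMenu F r Γ c ≤ regretRMenu F r C Γ :=
    OPT_sub_UprinRMenu_le_regretRMenu hC hc
  have hregret' : OPT F r c' - UprinRMenu F r Γ c' ≤ regretRMenu F r C Γ :=
    OPT_sub_UprinRMenu_le_regretRMenu hC hc'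
  have hprin : UprinRMenu F r Γ c + UagRMenu F Γ c ≤ W := UprinRMenu_add_UagRMenu_le hW
  have hprin' : UprinRMenu F r Γ c' ≤ w + UagRMenu F Γ c := UprinRMenu_le_add_UagRMenu hΓ hw
  linarith

end Menus

theorem uncLevel_pair {Act : Type} [Fintype Act] (c c' : Act → ℝ) :
    uncLevel {c, c'} = ‖c - c'‖ := by
  refine IsGreatest.csSup_eq ⟨⟨c, by simp, c', by simp, rfl⟩, ?_⟩
  rintro _ ⟨b, rfl | rfl, b', rfl | rfl, rfl⟩ <;> simp [norm_sub_rev]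

section HardInstance

variable {s t : ℝ} {p : Fin 2 → ℝ}

/-- Outcome probabilities of the hard instance: action `0` always succeeds (outcome `0`), action `1`
fails with probability `s`. The paper's instance has `s = √(2δ)`. -/
def hardProb (s : ℝ) : Fin 2 → Fin 2 → ℝ := fun a ω =>
  if a = 0 then (if ω = 0 then 1 else 0) else (if ω = 0 then 1 - s else s)

/-- Rewards of the hard instance: `1` for success, `0` for failure. -/
def hardReward : Fin 2 → ℝ := fun ω => if ω = 0 then 1 else 0

/-- Costs of the hard instance when action `0` costs `δ` and action `1` is free. Below, `δ` is
written as `s * t`, so that `t` is the success payment needed to implement action `0`; the paper's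
instance has `t = s / 2`. -/
def hardCost (δ : ℝ) : Fin 2 → ℝ := fun a => if a = 0 then δ else 0

theorem hardProb_nonneg (hs : s ∈ Set.Icc 0 1) (a ω : Fin 2) : 0 ≤ hardProb s a ω := by
  fin_cases a <;> fin_cases ω <;> simp [hardProb, hs.1, hs.2]

theorem Uag_hardProb_zero (c : Fin 2 → ℝ) : Uag (hardProb s) p c 0 = p 0 - c 0 := by
  simp [Uag, hardProb]

theorem Uag_hardProb_one (c : Fin 2 → ℝ) :
    Uag (hardProb s) p c 1 = (1 - s) * p 0 + s * p 1 - c 1 := by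
  simp [Uag, hardProb]

theorem prinAct_hardProb_zero : prinAct (hardProb s) hardReward p 0 = 1 - p 0 := by
  simp [prinAct, hardProb, hardReward]

theorem isBestResponse_hardProb_zero_iff {c : Fin 2 → ℝ} :
    IsBestResponse (hardProb s) p c 0 ↔ c 0 - c 1 ≤ s * (p 0 - p 1) := by
  simp only [IsBestResponse, Fin.forall_fin_two, le_refl, true_and, Uag_hardProb_zero,
    Uag_hardProb_one]
  constructor <;> intro h <;> linarith

theorem surplus_hardProb_zero_cost_le (hs : 0 ≤ s) (a : Fin 2) :
    surplus (hardProb s) hardReward 0 a ≤ 1 := by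
  fin_cases a <;> simp [surplus, hardProb, hardReward, hs]

theorem one_sub_le_OPT_hardCost (hs : s ∈ Set.Icc 0 1) (ht : 0 ≤ t) :
    1 - t ≤ OPT (hardProb s) hardReward (hardCost (s * t)) := by
  have hcontract : IsContract ![t, 0] := by simp [IsContract, Fin.forall_fin_two, ht]
  have hbest : IsBestResponse (hardProb s) ![t, 0] (hardCost (s * t)) 0 := by
    simp [isBestResponse_hardProb_zero_iff, hardCost]
  simpa [prinAct_hardProb_zero] using
    prinAct_le_OPT (r := hardReward) (hardProb_nonneg hs) hcontract hbest

theorem min_le_two_mul_of_isBestResponse_hardCost (hs : 0 ≤ s) (hp : IsContract p)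
    (h : IsBestResponse (hardProb s) p (hardCost (s * t)) 0) : min s (2 * t) ≤ 2 * p 0 := by
  rcases hs.eq_or_lt with rfl | hs_pos
  · exact (min_le_left _ _).trans (mul_nonneg zero_le_two (hp 0))
  · have hmul : s * t ≤ s * (p 0 - p 1) := by
      simpa [hardCost] using isBestResponse_hardProb_zero_iff.1 h
    have ht : t ≤ p 0 - p 1 := le_of_mul_le_mul_left hmul hs_pos
    linarith [min_le_right s (2 * t), hp 1]

theorem Uprin_hardCost_le (hs : s ∈ Set.Icc 0 1) (hp : IsContract p) :
    Uprin (hardProb s) hardReward p (hardCost (s * t)) ≤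
      1 - min s (2 * t) + ⨆ a, Uag (hardProb s) p 0 a := by
  have hsup : p 0 ≤ ⨆ a, Uag (hardProb s) p 0 a := by
    simpa [Uag_hardProb_zero] using Uag_le_iSup (hardProb s) p 0 0
  refine Uprin_le fun a ha => ?_
  fin_cases a
  · have hpay := min_le_two_mul_of_isBestResponse_hardCost hs.1 hp ha
    simp only [Fin.zero_eta, prinAct_hardProb_zero]
    linarith
  · have hprin : prinAct (hardProb s) hardReward p 1 ≤ 1 - s := by
      simpa [hardProb, hardReward] using
        prinAct_le_sum_reward (r := hardReward) (hardProb_nonneg hs 1) hp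
    simp only [Fin.mk_one]
    linarith [min_le_left s (2 * t), hp 0]

theorem norm_hardCost (δ : ℝ) : ‖hardCost δ‖ = |δ| := by
  have hsingle : hardCost δ = Pi.single 0 δ := funext fun a => (Pi.single_apply 0 δ a).symm
  rw [hsingle, Pi.norm_single, Real.norm_eq_abs]

theorem hard_instance_lower_bound_general (hs : s ∈ Set.Icc 0 1) (ht : 0 ≤ t) :
    uncLevel {0, hardCost (s * t)} = s * t ∧
      ∀ (K : ℕ) [NeZero K] (Γ : Fin K → RandCon (Fin 2)), (∀ i, (Γ i).valid) →
        min (s - t) t / 2 ≤ regretRMenu (hardProb s) hardReward {0, hardCost (s * t)} Γ := by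
  refine ⟨?_, fun K _ Γ hΓ => ?_⟩
  · rw [uncLevel_pair, zero_sub, norm_neg, norm_hardCost, abs_of_nonneg (mul_nonneg hs.1 ht)]
  have hcost_zero : hardCost 0 = 0 := by simp [hardCost, funext_iff]
  have hopt_zero : 1 ≤ OPT (hardProb s) hardReward 0 := by
    simpa [hcost_zero] using one_sub_le_OPT_hardCost hs le_rfl
  have hopt := one_sub_le_OPT_hardCost hs ht
  have hregret := OPT_add_OPT_sub_le_two_mul_regretRMenu (Set.toFinite {0, hardCost (s * t)})
    (Set.mem_insert _ _) (Set.mem_insert_of_mem _ rfl) hΓ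
    (surplus_hardProb_zero_cost_le hs.1) fun _ => Uprin_hardCost_le hs
  have hmin : min (s - t) t = min s (2 * t) - t := by
    rw [← min_sub_sub_right]
    ring_nf
  linarith

end HardInstance

/-- In the hard instance `I_δ` (for `δ ∈ [0,1/2]`), the uncertainty
level is `d(C) = δ` and every menu of randomized contracts has regret at least
`√(2δ)/4`. -/
theorem hard_instance_lower_bound
    (δ : ℝ) (hδ : δ ∈ Set.Icc (0:ℝ) (1/2))
    (F : Fin 2 → Fin 2 → ℝ)
    (hF : F = fun a ω =>
      if a = 0 then (if ω = 0 then (1:ℝ) else 0)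
      else (if ω = 0 then 1 - Real.sqrt (2*δ) else Real.sqrt (2*δ)))
    (r : Fin 2 → ℝ) (hr : r = fun ω => if ω = 0 then (1:ℝ) else 0)
    (C : Set (Fin 2 → ℝ))
    (hC : C = {(fun _ => (0:ℝ)), (fun a => if a = 0 then δ else 0)}) :
    uncLevel C = δ ∧
      ∀ (K : ℕ) (Γ : Fin (K+1) → RandCon (Fin 2)), (∀ i, (Γ i).valid) →
        regretRMenu F r C Γ ≥ Real.sqrt (2*δ) / 4 := by
  obtain ⟨hδ_nonneg, hδ_le⟩ := hδ
  have hs : √(2 * δ) ∈ Set.Icc 0 1 :=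
    ⟨Real.sqrt_nonneg _, Real.sqrt_le_one.2 (by linarith)⟩
  have hδ_eq : √(2 * δ) * (√(2 * δ) / 2) = δ := by
    rw [← mul_div_assoc, Real.mul_self_sqrt (by linarith)]
    ring
  have hmin : min (√(2 * δ) - √(2 * δ) / 2) (√(2 * δ) / 2) / 2 = √(2 * δ) / 4 := by
    rw [sub_half, min_self]
    ring
  subst hF hr hC
  have hgeneral := hard_instance_lower_bound_general hs (div_nonneg hs.1 zero_le_two)
  rw [hδ_eq, hmin] at hgeneral
  exact ⟨hgeneral.1, fun K => hgeneral.2 (K + 1)⟩
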